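/- The critical value function τ has no downward jumps: for every β_0 ∈ (1,∞), lim_{β↘β_0} τ(β) ≥ τ(β_0) and lim_{β↗β_0} τ(β) = τ(β_0). -/

import Mathlib

open Set Filter MeasureTheory Topology

noncomputable section

/-- The β-transformation `x ↦ βx - ⌊βx⌋`. -/
def Tbeta (β x : ℝ) : ℝ := Int.fract (β * x)

/-- The survivor set `K_β(t)`: points of `[0,1)` whose orbit never enters `[0,t)`. -/
def survivor (β t : ℝ) : Set ℝ :=
  {x | x ∈ Set.Ico (0 : ℝ) 1 ∧ ∀ n : ℕ, t ≤ (Tbeta β)^[n] x}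

/-- The set-valued bifurcation set `E_β`. -/
def Ebif (β : ℝ) : Set ℝ :=
  {t | t ∈ Set.Ico (0 : ℝ) 1 ∧ ∀ t' : ℝ, t < t' → survivor β t' ≠ survivor β t}

/-- `(c)_β = Σ_{i≥1} c_i β^{-i}` for an infinite digit sequence (indexed from `0`). -/
def valSeq (β : ℝ) (c : ℕ → ℕ) : ℝ := ∑' i : ℕ, (c i : ℝ) / β ^ (i + 1)

/-- `(w 0^∞)_β` for a finite word `w`. -/
def valWord (β : ℝ) (w : List ℕ) : ℝ :=
  ∑ i ∈ Finset.range w.length, (w.getD i 0 : ℝ) / β ^ (i + 1)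

/-- `w⁺`: increment the last letter of `w`. -/
def wplus (w : List ℕ) : List ℕ := w.dropLast ++ [w.getLast! + 1]

/-- `w⁻`: decrement the last letter of `w`. -/
def wminus (w : List ℕ) : List ℕ := w.dropLast ++ [w.getLast! - 1]

/-- `θ`: increment every digit of `w` by one. -/
def theta (w : List ℕ) : List ℕ := w.map (· + 1)

/-- `L(w)`: the lexicographically largest cyclic permutation of `w`. -/
def maxCyc (w : List ℕ) : List ℕ := ((List.range w.length).map w.rotate).foldl max []

/-- `w^∞`: the periodic sequence with period block `w`. -/
def perSeq (w : List ℕ) : ℕ → ℕ := fun i => w.getD (i % w.length) 0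

/-- The sequence given by the word `w` followed by the sequence `c`. -/
def wordSeq (w : List ℕ) (c : ℕ → ℕ) : ℕ → ℕ :=
  fun i => if i < w.length then w.getD i 0 else c (i - w.length)

/-- Strict lexicographic order `≺` on sequences. -/
def seqLt (x y : ℕ → ℕ) : Prop := ∃ n, (∀ i < n, x i = y i) ∧ x n < y n

/-- Lexicographic order `≼` on sequences. -/
def seqLe (x y : ℕ → ℕ) : Prop := x = y ∨ seqLt x y

/-- The `n`-fold left shift `σⁿ` on sequences. -/
def shiftn (n : ℕ) (x : ℕ → ℕ) : ℕ → ℕ := fun i => x (i + n)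

/-- One step of the Farey recursion: insert the concatenation `w_i w_{i+1}`
between consecutive entries. -/
def fareyInsert : List (List ℕ) → List (List ℕ)
  | [] => []
  | [w] => [w]
  | w :: v :: rest => w :: (w ++ v) :: fareyInsert (v :: rest)

/-- The ordered set `F_n` of Farey words of level `n`. -/
def fareyLevel : ℕ → List (List ℕ)
  | 0 => [[0], [1]]
  | n + 1 => fareyInsert (fareyLevel n)

/-- `F`: all Farey words of length at least two. -/
def FareySet : Set (List ℕ) := {w | (∃ n, w ∈ fareyLevel n) ∧ w ≠ [0] ∧ w ≠ [1]}

/-- `F̂ = F ∪ {1}`. -/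
def FareyHat : Set (List ℕ) := FareySet ∪ {[1]}

/-- The extended Farey set `F_e = {θ^k(w) : w ∈ F̂, k ≥ 0}`. -/
def FareyExt : Set (List ℕ) := {w | ∃ v ∈ FareyHat, ∃ k : ℕ, w = theta^[k] v}

/-- A nonempty word is Lyndon iff it is strictly smaller than each of its nontrivial
cyclic rotations (equivalently: aperiodic and lexicographically smallest among its
cyclic permutations). -/
def IsLyndon (w : List ℕ) : Prop := w ≠ [] ∧ ∀ i, 0 < i → i < w.length → w < w.rotate i

/-- `L_e`: all Lyndon words over `ℕ ∪ {0}` except the single-letter word `0`. -/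
def LyndonExt : Set (List ℕ) := {w | IsLyndon w ∧ w ≠ [0]}

/-- `L`: Lyndon words over `{0,1}` of length at least `2`. -/
def LyndonBin : Set (List ℕ) := {w | IsLyndon w ∧ 2 ≤ w.length ∧ ∀ d ∈ w, d ≤ 1}

/-- The block of `Φ_s` emitted for current digit `d` after previous digit `p`:
`L(s)` for `00`, `s⁻` for `10`, `L(s)⁺` for `01`, `s` for `11`. -/
def phiBlock (s : List ℕ) (p d : ℕ) : List ℕ :=
  if d = 0 then (if p = 0 then maxCyc s else wminus s)
  else (if p = 0 then wplus (maxCyc s) else s)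

def phiAux (s : List ℕ) : ℕ → List ℕ → List ℕ
  | _, [] => []
  | p, d :: rest => phiBlock s p d ++ phiAux s d rest

/-- The substitution `Φ_s` on finite words; `s • r = subst s r`.  An initial digit `0`
produces `s⁻`, an initial digit `1` produces `L(s)⁺`, and thereafter runs
`0^k` resp. `1^l` produce `L(s)^{k-1}` resp. `s^{l-1}`, in accordance with
`Φ_s(0^{k₁}1^{l₁}…) = s⁻ L(s)^{k₁-1} L(s)⁺ s^{l₁-1} …` and
`Φ_s(1^{k₁}0^{l₁}…) = L(s)⁺ s^{k₁-1} s⁻ L(s)^{l₁-1} …`. -/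
def subst (s r : List ℕ) : List ℕ :=
  match r with
  | [] => []
  | d :: rest => phiBlock s (1 - d) d ++ phiAux s d rest

/-- The substitution `Φ_s` on infinite sequences, as the limit of its values
on initial segments (each digit contributes a nonempty block, so the `i`-th letter
is determined by the first `i+1` digits). -/
def phiSeq (s : List ℕ) (c : ℕ → ℕ) : ℕ → ℕ :=
  fun i => (subst s (List.ofFn fun j : Fin (i + 1) => c j)).getD i 0

/-- `Λ_e(m) = {s₁ • s₂ • … • s_m : s₁ ∈ F_e, s₂,…,s_m ∈ F}`. -/
def LambdaE (m : ℕ) : Set (List ℕ) :=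
  {w | ∃ s₁ ∈ FareyExt, ∃ rs : List (List ℕ),
    rs.length = m - 1 ∧ (∀ r ∈ rs, r ∈ FareySet) ∧ w = rs.foldl subst s₁}

/-- `Λ_e = ∪_{m≥1} Λ_e(m)`. -/
def LambdaExt : Set (List ℕ) := ⋃ m ∈ Set.Ici 1, LambdaE m

/-- `β_ℓ^S`: the base `β > 1` with `(L(S)^∞)_β = 1` (it is unique since
`β ↦ (c)_β` is strictly decreasing). -/
def betaL (S : List ℕ) : ℝ :=
  Classical.epsilon fun β : ℝ => 1 < β ∧ valSeq β (perSeq (maxCyc S)) = 1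

/-- `β_*^S`: the base `β > 1` with `(L(S)⁺ S⁻ L(S)^∞)_β = 1`. -/
def betaStar (S : List ℕ) : ℝ :=
  Classical.epsilon fun β : ℝ =>
    1 < β ∧ valSeq β (wordSeq (wplus (maxCyc S) ++ wminus S) (perSeq (maxCyc S))) = 1

/-- `β_r^S`: the base `β > 1` with `(L(S)⁺ S^∞)_β = 1`. -/
def betaR (S : List ℕ) : ℝ :=
  Classical.epsilon fun β : ℝ => 1 < β ∧ valSeq β (wordSeq (wplus (maxCyc S)) (perSeq S)) = 1

/-- The Lyndon/Farey interval `J^S = [β_ℓ^S, β_r^S]`. -/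
def Jint (S : List ℕ) : Set ℝ := Set.Icc (betaL S) (betaR S)

/-- The basic interval `I^S = [β_ℓ^S, β_*^S]`. -/
def Iint (S : List ℕ) : Set ℝ := Set.Icc (betaL S) (betaStar S)

/-- The exceptional set `E = (1,∞) ∖ ∪_{s ∈ F_e} J^s`. -/
def Eexc : Set ℝ := Set.Ioi 1 \ ⋃ s ∈ FareyExt, Jint s

/-- The relative exceptional set `E^S = (J^S ∖ I^S) ∖ ∪_{r ∈ F} J^{S•r}`. -/
def EexcRel (S : List ℕ) : Set ℝ :=
  (Jint S \ Iint S) \ ⋃ r ∈ FareySet, Jint (subst S r)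

/-- The infinitely renormalizable set `E_∞ = ∩_{m≥1} ∪_{S ∈ Λ_e(m)} J^S`. -/
def Einf : Set ℝ := ⋂ m ∈ Set.Ici 1, ⋃ S ∈ LambdaE m, Jint S

/-- `E_L = E ∪ {β_ℓ^s : s ∈ F_e}`. -/
def EL : Set ℝ := Eexc ∪ {x | ∃ s ∈ FareyExt, x = betaL s}

/-- The critical value `τ(β) = min{t > 0 : dim_H K_β(t) = 0}`. -/
def tau (β : ℝ) : ℝ := sInf {t : ℝ | 0 < t ∧ dimH (survivor β t) = 0}

end

/-!
Write a point in base `β` by its greedy digits and read the digits again in another base `β'`. As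
long as the new values stay in some `[0, ρ]` with `ρ < 1`, this conjugates `T_β` to `T_β'`. Points
whose digits first differ at place `n` are at most `β⁻ⁿ` apart before and at least a constant times
`β'⁻ⁿ` apart after the change of base, so positive Hausdorff dimension is preserved.

Raising the base lowers points by at most `(β' - β) / (β' - 1)`. Hence `τ(β) + log (β - 1)` is
nondecreasing, so `τ` has one-sided limits, with `τ(β₀-) ≤ τ(β₀) ≤ τ(β₀+)`.

Lowering the base raises points, possibly beyond `1`, so for lower semicontinuity from the left one
needs, for `t < t'`, a set of positive dimension whose orbits stay in `[t, s]` with `s < 1` when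
`K_β(t')` has positive dimension. Either `K_β(t')` is a countable union of sets of orbits bounded
away from `1`, or it contains an orbit accumulating at `1`. In the latter case two points of the
orbit near `1`, each with a late return even nearer to `1`, span a two-branch horseshoe, and its
orbits stay below pieces of the given orbit, within distance `t' - t`.
-/

open scoped NNReal

namespace BetaTransformation

theorem dimH_image_le_of_edist_le_rpow {ι X Y : Type*} [EMetricSpace X] [EMetricSpace Y]
    {S : Set ι} {f : ι → X} {g : ι → Y} {C r : ℝ≥0} (hr : 0 < r)
    (h : ∀ x ∈ S, ∀ y ∈ S, edist (g x) (g y) ≤ C * edist (f x) (f y) ^ (r : ℝ)) :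
    dimH (g '' S) ≤ dimH (f '' S) / r := by
  rcases S.eq_empty_or_nonempty with rfl | ⟨x₀, _⟩
  · simp
  have : Nonempty Y := ⟨g x₀⟩
  have hfactor : (S.domRestrict g).FactorsThrough (S.domRestrict f) := by
    rintro ⟨x, hx⟩ ⟨y, hy⟩ hxy
    have hxy : f x = f y := hxy
    have hle := h x hx y hy
    rw [hxy, edist_self, ENNReal.zero_rpow_of_pos (mod_cast hr), mul_zero] at hle
    exact edist_le_zero.1 hle
  obtain ⟨e, he⟩ := (Function.factorsThrough_iff _).1 hfactor
  have he (x) (hx : x ∈ S) : e (f x) = g x := (congrFun he ⟨x, hx⟩).symm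
  have hholder : HolderOnWith C r e (f '' S) := by
    rintro _ ⟨x, hx, rfl⟩ _ ⟨y, hy, rfl⟩
    rw [he x hx, he y hy]
    exact h x hx y hy
  have himage : e '' (f '' S) = g '' S := by
    rw [image_image]
    exact image_congr he
  exact himage ▸ hholder.dimH_image_le hr

theorem dimH_image_le_div_logb {ι X Y : Type*} [MetricSpace X] [MetricSpace Y]
    {S : Set ι} {f : ι → X} {g : ι → Y} {a b c C : ℝ} (ha : 1 < a) (hb : 1 < b) (hc : 0 < c)
    (hsep : ∀ x ∈ S, ∀ y ∈ S, g x ≠ g y →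
      ∃ n : ℕ, dist (g x) (g y) ≤ C / a ^ n ∧ c / b ^ n ≤ dist (f x) (f y)) :
    dimH (g '' S) ≤ dimH (f '' S) / ENNReal.ofReal (Real.logb b a) := by
  set γ := Real.logb b a
  have hγ : 0 < γ := Real.logb_pos hb ha
  have hbγ : b ^ γ = a := Real.rpow_logb (by linarith) hb.ne' (by linarith)
  have : 0 < c ^ γ := Real.rpow_pos_of_pos hc γ
  have hpow (n : ℕ) : (c / b ^ n) ^ γ = c ^ γ / a ^ n := by
    rw [Real.div_rpow hc.le (by positivity), ← Real.rpow_pow_comm (by positivity), hbγ]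
  have hdist : ∀ x ∈ S, ∀ y ∈ S,
      dist (g x) (g y) ≤ |C| / c ^ γ * dist (f x) (f y) ^ γ := by
    intro x hx y hy
    rcases eq_or_ne (g x) (g y) with hxy | hxy
    · rw [hxy, dist_self]
      positivity
    obtain ⟨n, hg, hf⟩ := hsep x hx y hy hxy
    calc dist (g x) (g y) ≤ |C| / a ^ n := hg.trans (by gcongr; exact le_abs_self C)
      _ = |C| / c ^ γ * (c / b ^ n) ^ γ := by rw [hpow]; field_simp
      _ ≤ |C| / c ^ γ * dist (f x) (f y) ^ γ := by gcongr
  refine dimH_image_le_of_edist_le_rpow (C := (|C| / c ^ γ).toNNReal) (Real.toNNReal_pos.2 hγ)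
    fun x hx y hy => ?_
  rw [Real.coe_toNNReal γ hγ.le, edist_dist, edist_dist,
    ENNReal.ofReal_rpow_of_nonneg dist_nonneg hγ.le]
  exact (ENNReal.ofReal_le_ofReal (hdist x hx y hy)).trans_eq (ENNReal.ofReal_mul (by positivity))

theorem exists_coding {ι X : Type*} [MetricSpace X] [CompleteSpace X] [BoundedSpace X]
    [Nonempty X] {K : ℝ≥0} (hK : K < 1) {φ : ι → X → X} (hφ : ∀ i, LipschitzWith K (φ i)) :
    ∃ f : (ℕ → ι) → X, ∀ b, f b = φ (b 0) (f fun k => b (k + 1)) := by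
  let Φ : ((ℕ → ι) → X) → (ℕ → ι) → X := fun g b => φ (b 0) (g fun k => b (k + 1))
  let x₀ : X := Classical.arbitrary X
  let F : ℕ → (ℕ → ι) → X := fun n => Φ^[n] fun _ => x₀
  have hF (n : ℕ) : F (n + 1) = Φ (F n) := Function.iterate_succ_apply' Φ n _
  have hdist (n : ℕ) : ∀ b, dist (F n b) (F (n + 1) b) ≤ Metric.diam (univ : Set X) * K ^ n := by
    induction n with
    | zero =>
      intro b
      simpa using Metric.dist_le_diam_of_mem (Bornology.IsBounded.all univ) (mem_univ _)
        (mem_univ _)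
    | succ n ih =>
      intro b
      rw [hF n, hF (n + 1), pow_succ', mul_left_comm]
      exact ((hφ _).dist_le_mul _ _).trans (mul_le_mul_of_nonneg_left (ih _) K.coe_nonneg)
  have hlim (b : ℕ → ι) : ∃ y, Tendsto (fun n => F n b) atTop (𝓝 y) :=
    cauchySeq_tendsto_of_complete (cauchySeq_of_le_geometric K _ (mod_cast hK) fun n => hdist n b)
  choose f hf using hlim
  refine ⟨f, fun b => tendsto_nhds_unique ((hf b).comp (tendsto_add_atTop_nat 1)) ?_⟩
  simp only [Function.comp_def, hF]
  exact ((hφ (b 0)).continuous.tendsto _).comp (hf _)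

theorem div_pow_le_dist_coding {ι X : Type*} [MetricSpace X] {φ : ι → X → X}
    {f : (ℕ → ι) → X} {K : ℝ≥0} {c : ℝ} (hK : 0 < K)
    (hf : ∀ b, f b = φ (b 0) (f fun k => b (k + 1))) (hφ : ∀ i, AntilipschitzWith K (φ i))
    (hsep : ∀ i j, i ≠ j → ∀ z w, c ≤ dist (φ i z) (φ j w)) {n : ℕ} :
    ∀ {b b' : ℕ → ι}, (∀ i < n, b i = b' i) → b n ≠ b' n → c / K ^ n ≤ dist (f b) (f b') := by
  induction n with
  | zero =>
    intro b b' _ hne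
    rw [hf b, hf b', pow_zero, div_one]
    exact hsep _ _ hne _ _
  | succ n ih =>
    intro b b' heq hne
    have htail : c / K ^ n ≤ dist (f fun k => b (k + 1)) (f fun k => b' (k + 1)) :=
      ih (fun i hi => heq (i + 1) (by lia)) hne
    rw [hf b, hf b', heq 0 n.succ_pos, pow_succ, ← div_div, div_le_iff₀' (mod_cast hK)]
    exact htail.trans ((hφ _).le_mul_dist _ _)

theorem dimH_range_coding_pos {X : Type*} [MetricSpace X] {φ : Fin 2 → X → X}
    {f : (ℕ → Fin 2) → X} {K : ℝ≥0} {c : ℝ} (hK : 1 < K) (hc : 0 < c)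
    (hf : ∀ b, f b = φ (b 0) (f fun k => b (k + 1))) (hφ : ∀ i, AntilipschitzWith K (φ i))
    (hsep : ∀ i j, i ≠ j → ∀ z w, c ≤ dist (φ i z) (φ j w)) : 0 < dimH (range f) := by
  have hdigits : 0 < dimH (Real.ofDigits (b := 2) '' univ) := by
    refine lt_of_lt_of_le ?_ (dimH_mono (Real.ofDigits_SurjOn (b := 2) one_lt_two))
    rw [Real.dimH_of_nonempty_interior (by simp)]
    simp
  have hle := dimH_image_le_div_logb (S := univ) (f := f) (g := Real.ofDigits (b := 2)) (C := 1)
    one_lt_two (b := K) (mod_cast hK) hc fun b _ b' _ hne => by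
      have hbb' : b ≠ b' := fun h => hne (by rw [h])
      have hagree : ∀ i < PiNat.firstDiff b b', b i = b' i :=
        fun i hi => PiNat.apply_eq_of_lt_firstDiff hi
      refine ⟨PiNat.firstDiff b b', ?_, div_pow_le_dist_coding (zero_lt_one.trans hK) hf hφ hsep
        hagree (PiNat.apply_firstDiff_ne hbb')⟩
      simpa [Real.dist_eq] using Real.abs_ofDigits_sub_ofDigits_le hagree
  rw [← image_univ]
  exact pos_iff_ne_zero.2 (ENNReal.div_pos_iff.1 (hdigits.trans_le hle)).1

/-- The points whose whole forward orbit under `T` stays in `J`. -/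
def trappedSet {α : Type*} (T : α → α) (J : Set α) : Set α := {x | ∀ n : ℕ, T^[n] x ∈ J}

theorem mapsTo_trappedSet {α : Type*} (T : α → α) (J : Set α) :
    MapsTo T (trappedSet T J) (trappedSet T J) :=
  fun x hx n => Function.iterate_succ_apply T n x ▸ hx (n + 1)

theorem subset_trappedSet_of_mapsTo {α : Type*} {T : α → α} {S J : Set α} (hT : MapsTo T S S)
    (hSJ : S ⊆ J) : S ⊆ trappedSet T J :=
  fun _ hx n => hSJ (hT.iterate n hx)

theorem range_coding_subset_trappedSet {ι α : Type*} {T : α → α} {J : Set α} {n : ι → ℕ}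
    {f : (ℕ → ι) → α} (hn : ∀ i, 0 < n i) (hJ : ∀ b, ∀ k ≤ n (b 0), T^[k] (f b) ∈ J)
    (hret : ∀ b, T^[n (b 0)] (f b) = f fun k => b (k + 1)) : range f ⊆ trappedSet T J := by
  rintro _ ⟨b, rfl⟩ k
  induction k using Nat.strong_induction_on generalizing b with
  | _ k ih =>
    rcases le_total k (n (b 0)) with hk | hk
    · exact hJ b k hk
    · obtain ⟨m, rfl⟩ := Nat.exists_eq_add_of_le' hk
      rw [Function.iterate_add_apply, hret]
      exact ih m (Nat.lt_add_of_pos_right (hn _)) _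

theorem Tbeta_mem_Ico (β x : ℝ) : Tbeta β x ∈ Ico (0 : ℝ) 1 :=
  ⟨Int.fract_nonneg _, Int.fract_lt_one _⟩

theorem iterate_Tbeta_mem_Ico (β : ℝ) {x : ℝ} (hx : x ∈ Ico (0 : ℝ) 1) (n : ℕ) :
    (Tbeta β)^[n] x ∈ Ico (0 : ℝ) 1 :=
  MapsTo.iterate (fun y _ => Tbeta_mem_Ico β y) n hx

theorem survivor_eq_trappedSet (β : ℝ) {t : ℝ} (ht : 0 ≤ t) :
    survivor β t = trappedSet (Tbeta β) (Ico t 1) := by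
  ext x
  refine ⟨fun hx n => ⟨hx.2 n, (iterate_Tbeta_mem_Ico β hx.1 n).2⟩,
    fun hx => ⟨⟨ht.trans (hx 0).1, (hx 0).2⟩, fun n => (hx n).1⟩⟩

/-! ### Change of base -/

/-- The value in base `β'` of the greedy digits of `x` in base `β`. -/
noncomputable def baseChange (β β' x : ℝ) : ℝ :=
  ∑' n : ℕ, (⌊β * (Tbeta β)^[n] x⌋ : ℝ) / β' ^ (n + 1)

/-- The orbit sum `∑ Tⁿx / β'ⁿ⁺¹` of `T = Tbeta β`, which measures the displacement of `x` under
the change of base. -/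
noncomputable def orbitSum (β β' x : ℝ) : ℝ := ∑' n : ℕ, (Tbeta β)^[n] x / β' ^ (n + 1)

section BaseChange

variable {β β' x y : ℝ}

theorem hasSum_one_div_pow_succ (hβ' : 1 < β') :
    HasSum (fun n : ℕ => 1 / β' ^ (n + 1)) (1 / (β' - 1)) := by
  have hgeom := (hasSum_geometric_of_lt_one (by positivity)
    (inv_lt_one_of_one_lt₀ hβ')).mul_left β'⁻¹
  have hval : 1 / (β' - 1) = β'⁻¹ * (1 - β'⁻¹)⁻¹ := by
    rw [← mul_inv, mul_sub, mul_one, mul_inv_cancel₀ (by positivity), one_div]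
  simpa only [one_div, pow_succ', mul_inv, inv_pow, hval] using hgeom

theorem summable_orbitSum (β : ℝ) (hβ' : 1 < β') (x : ℝ) :
    Summable fun n : ℕ => (Tbeta β)^[n] x / β' ^ (n + 1) := by
  rw [← summable_nat_add_iff 1]
  have hgeom := (summable_nat_add_iff 1).2 (hasSum_one_div_pow_succ hβ').summable
  have hT (n : ℕ) : (Tbeta β)^[n + 1] x ∈ Ico (0 : ℝ) 1 :=
    Function.iterate_succ_apply' (Tbeta β) n x ▸ Tbeta_mem_Ico _ _
  refine hgeom.of_nonneg_of_le (fun n => div_nonneg (hT n).1 (by positivity)) fun n => ?_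
  gcongr
  exact (hT n).2.le

theorem orbitSum_nonneg (β : ℝ) (hβ' : 0 ≤ β') (hx : x ∈ Ico (0 : ℝ) 1) : 0 ≤ orbitSum β β' x :=
  tsum_nonneg fun n => div_nonneg (iterate_Tbeta_mem_Ico β hx n).1 (by positivity)

theorem orbitSum_le (β : ℝ) (hβ' : 1 < β') (hx : x ∈ Ico (0 : ℝ) 1) :
    orbitSum β β' x ≤ 1 / (β' - 1) :=
  hasSum_le (fun n => by gcongr; exact (iterate_Tbeta_mem_Ico β hx n).2.le)
    (summable_orbitSum β hβ' x).hasSum (hasSum_one_div_pow_succ hβ')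

theorem mul_orbitSum (β : ℝ) (hβ' : 1 < β') (x : ℝ) :
    β' * orbitSum β β' x = x + orbitSum β β' (Tbeta β x) := by
  rw [orbitSum, (summable_orbitSum β hβ' x).tsum_eq_zero_add, mul_add, ← tsum_mul_left]
  congr 1
  · simp only [Function.iterate_zero, id, zero_add, pow_one]
    field_simp
  · refine tsum_congr fun n => ?_
    rw [Function.iterate_succ_apply]
    field_simp
    ring

theorem floor_mul_eq (β x : ℝ) : (⌊β * x⌋ : ℝ) = β * x - Tbeta β x := by
  rw [Tbeta, Int.self_sub_fract]

theorem baseChange_eq_sub (β : ℝ) (hβ' : 1 < β') (x : ℝ) :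
    baseChange β β' x = x - (β' - β) * orbitSum β β' x := by
  have hdigit (n : ℕ) : (⌊β * (Tbeta β)^[n] x⌋ : ℝ) / β' ^ (n + 1) =
      β * ((Tbeta β)^[n] x / β' ^ (n + 1)) - (Tbeta β)^[n] (Tbeta β x) / β' ^ (n + 1) := by
    rw [floor_mul_eq, ← Function.iterate_succ_apply, Function.iterate_succ_apply']
    ring
  calc baseChange β β' x = β * orbitSum β β' x - orbitSum β β' (Tbeta β x) := by
        rw [baseChange, tsum_congr hdigit, ((summable_orbitSum β hβ' x).mul_left β).tsum_sub
          (summable_orbitSum β hβ' _), tsum_mul_left, orbitSum, orbitSum]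
    _ = x - (β' - β) * orbitSum β β' x := by
        linear_combination mul_orbitSum β hβ' x

theorem mul_baseChange (β : ℝ) (hβ' : 1 < β') (x : ℝ) :
    β' * baseChange β β' x = ⌊β * x⌋ + baseChange β β' (Tbeta β x) := by
  rw [baseChange_eq_sub β hβ', baseChange_eq_sub β hβ', floor_mul_eq]
  linear_combination -(β' - β) * mul_orbitSum β hβ' x

theorem Tbeta_baseChange (hβ' : 1 < β') (h : baseChange β β' (Tbeta β x) ∈ Ico (0 : ℝ) 1) :
    Tbeta β' (baseChange β β' x) = baseChange β β' (Tbeta β x) := by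
  rw [Tbeta, mul_baseChange β hβ', Int.fract_intCast_add, Int.fract_eq_self.2 h]

theorem sub_div_le_baseChange (hβ' : 1 < β') (hββ' : β ≤ β') (hx : x ∈ Ico (0 : ℝ) 1) :
    x - (β' - β) / (β' - 1) ≤ baseChange β β' x := by
  rw [baseChange_eq_sub β hβ', ← mul_one_div]
  gcongr
  exact orbitSum_le β hβ' hx

theorem baseChange_le_div (hβ : 0 ≤ β) (hβ' : 1 < β') (hββ' : β ≤ β') (hx : x ≤ 1) :
    baseChange β β' x ≤ β / β' := by
  have hnonneg := mul_nonneg (sub_nonneg.2 hββ')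
    (orbitSum_nonneg β (zero_le_one.trans hβ'.le) (Tbeta_mem_Ico β x))
  rw [le_div_iff₀' (by linarith), baseChange_eq_sub β hβ']
  calc β' * (x - (β' - β) * orbitSum β β' x)
      = β * x - (β' - β) * orbitSum β β' (Tbeta β x) := by
        linear_combination -(β' - β) * mul_orbitSum β hβ' x
    _ ≤ β := by linarith [mul_le_of_le_one_right hβ hx]

theorem le_baseChange (hβ' : 1 < β') (hββ' : β' ≤ β) (hx : x ∈ Ico (0 : ℝ) 1) :
    x ≤ baseChange β β' x := by
  have := mul_nonneg (sub_nonneg.2 hββ') (orbitSum_nonneg β (zero_le_one.trans hβ'.le) hx)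
  rw [baseChange_eq_sub β hβ']
  linarith

theorem baseChange_le_add_div (hβ' : 1 < β') (hββ' : β' ≤ β) (hx : x ∈ Ico (0 : ℝ) 1) :
    baseChange β β' x ≤ x + (β - β') / (β' - 1) := by
  have := mul_le_mul_of_nonneg_left (orbitSum_le β hβ' hx) (sub_nonneg.2 hββ')
  rw [baseChange_eq_sub β hβ', ← mul_one_div]
  linarith

theorem iterate_Tbeta_sub {n : ℕ}
    (h : ∀ k < n, ⌊β * (Tbeta β)^[k] x⌋ = ⌊β * (Tbeta β)^[k] y⌋) :
    (Tbeta β)^[n] x - (Tbeta β)^[n] y = β ^ n * (x - y) := by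
  induction n with
  | zero => simp
  | succ n ih =>
    rw [Function.iterate_succ_apply', Function.iterate_succ_apply', Tbeta, Tbeta, Int.fract,
      Int.fract, h n n.lt_succ_self, pow_succ']
    linear_combination β * ih fun k hk => h k (hk.trans n.lt_succ_self)

theorem baseChange_iterate_sub (hβ' : 1 < β') {n : ℕ}
    (h : ∀ k < n, ⌊β * (Tbeta β)^[k] x⌋ = ⌊β * (Tbeta β)^[k] y⌋) :
    baseChange β β' ((Tbeta β)^[n] x) - baseChange β β' ((Tbeta β)^[n] y) =
      β' ^ n * (baseChange β β' x - baseChange β β' y) := by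
  induction n with
  | zero => simp
  | succ n ih =>
    have hx := mul_baseChange β hβ' ((Tbeta β)^[n] x)
    have hy := mul_baseChange β hβ' ((Tbeta β)^[n] y)
    rw [h n n.lt_succ_self] at hx
    rw [Function.iterate_succ_apply', Function.iterate_succ_apply', pow_succ']
    linear_combination hy - hx + β' * ih fun k hk => h k (hk.trans n.lt_succ_self)

theorem exists_floor_ne_of_ne (hβ : 1 < β) (hx : x ∈ Ico (0 : ℝ) 1) (hy : y ∈ Ico (0 : ℝ) 1)
    (hxy : x ≠ y) : ∃ n, ⌊β * (Tbeta β)^[n] x⌋ ≠ ⌊β * (Tbeta β)^[n] y⌋ := by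
  by_contra! h
  obtain ⟨n, hn⟩ := pow_unbounded_of_one_lt |x - y|⁻¹ hβ
  have hlarge : 1 < β ^ n * |x - y| := (inv_lt_iff_one_lt_mul₀ (abs_sub_pos.2 hxy)).1 hn
  have hsmall : |(Tbeta β)^[n] x - (Tbeta β)^[n] y| < 1 := by
    simpa only [sub_zero] using
      abs_sub_lt_of_nonneg_of_lt (iterate_Tbeta_mem_Ico β hx n).1 (iterate_Tbeta_mem_Ico β hx n).2
        (iterate_Tbeta_mem_Ico β hy n).1 (iterate_Tbeta_mem_Ico β hy n).2
  rw [iterate_Tbeta_sub fun k _ => h k, abs_mul, abs_of_pos (by positivity)] at hsmall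
  exact hsmall.not_gt hlarge

theorem le_abs_baseChange_sub_of_floor_ne (hβ' : 1 < β') {ρ : ℝ}
    (hρ : |baseChange β β' (Tbeta β x) - baseChange β β' (Tbeta β y)| ≤ ρ)
    (hxy : ⌊β * x⌋ ≠ ⌊β * y⌋) : (1 - ρ) / β' ≤ |baseChange β β' x - baseChange β β' y| := by
  have hdigit : (1 : ℝ) ≤ |(⌊β * x⌋ : ℝ) - ⌊β * y⌋| := mod_cast Int.one_le_abs (sub_ne_zero.2 hxy)
  have hsub : (⌊β * x⌋ : ℝ) - ⌊β * y⌋ = β' * (baseChange β β' x - baseChange β β' y) -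
      (baseChange β β' (Tbeta β x) - baseChange β β' (Tbeta β y)) := by
    linear_combination mul_baseChange β hβ' y - mul_baseChange β hβ' x
  rw [hsub] at hdigit
  have htriangle := hdigit.trans (abs_sub _ _)
  rw [abs_mul, abs_of_pos (by linarith)] at htriangle
  rw [div_le_iff₀' (by linarith)]
  linarith

theorem exists_separation_baseChange {S : Set ℝ} {ρ : ℝ} (hβ : 1 < β) (hβ' : 1 < β')
    (hS : S ⊆ Ico 0 1) (hinv : MapsTo (Tbeta β) S S)
    (hmem : MapsTo (baseChange β β') S (Icc 0 ρ)) (hx : x ∈ S) (hy : y ∈ S) (hxy : x ≠ y) :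
    ∃ n : ℕ, dist x y ≤ 1 / β ^ n ∧
      (1 - ρ) / β' / β' ^ n ≤ dist (baseChange β β' x) (baseChange β β' y) := by
  classical
  have hdiff := exists_floor_ne_of_ne hβ (hS hx) (hS hy) hxy
  set n := Nat.find hdiff
  have hagree : ∀ k < n, ⌊β * (Tbeta β)^[k] x⌋ = ⌊β * (Tbeta β)^[k] y⌋ :=
    fun k hk => not_not.1 (Nat.find_min hdiff hk)
  have hxn := hinv.iterate n hx
  have hyn := hinv.iterate n hy
  refine ⟨n, ?_, ?_⟩
  · rw [le_div_iff₀' (by positivity), Real.dist_eq, ← abs_of_pos (a := β ^ n) (by positivity),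
      ← abs_mul, ← iterate_Tbeta_sub hagree]
    exact abs_sub_le_of_nonneg_of_le (hS hxn).1 (hS hxn).2.le (hS hyn).1 (hS hyn).2.le
  · have hρ := abs_sub_le_of_nonneg_of_le (hmem (hinv hxn)).1 (hmem (hinv hxn)).2
      (hmem (hinv hyn)).1 (hmem (hinv hyn)).2
    rw [div_le_iff₀' (by positivity), Real.dist_eq, ← abs_of_pos (a := β' ^ n) (by positivity),
      ← abs_mul, ← baseChange_iterate_sub hβ' hagree]
    exact le_abs_baseChange_sub_of_floor_ne hβ' hρ (Nat.find_spec hdiff)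

theorem dimH_survivor_pos_of_baseChange {S : Set ℝ} {t ρ : ℝ} (hβ : 1 < β) (hβ' : 1 < β')
    (ht : 0 ≤ t) (hρ : ρ < 1) (hS : S ⊆ Ico 0 1) (hinv : MapsTo (Tbeta β) S S)
    (hmem : MapsTo (baseChange β β') S (Icc t ρ)) (hdim : 0 < dimH S) :
    0 < dimH (survivor β' t) := by
  have hIcc : Icc t ρ ⊆ Ico t 1 := fun _ hy => ⟨hy.1, hy.2.trans_lt hρ⟩
  have hsemiconj : ∀ x ∈ S, Tbeta β' (baseChange β β' x) = baseChange β β' (Tbeta β x) :=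
    fun x hx => Tbeta_baseChange hβ' (Ico_subset_Ico_left ht (hIcc (hmem (hinv hx))))
  have himage : MapsTo (Tbeta β') (baseChange β β' '' S) (baseChange β β' '' S) := by
    rintro _ ⟨x, hx, rfl⟩
    exact ⟨Tbeta β x, hinv hx, (hsemiconj x hx).symm⟩
  have hsub : baseChange β β' '' S ⊆ survivor β' t := by
    rw [survivor_eq_trappedSet β' ht]
    exact subset_trappedSet_of_mapsTo himage (hmem.mono_right hIcc).image_subset
  have hle := dimH_image_le_div_logb (g := id) hβ hβ' (div_pos (sub_pos.2 hρ) (by linarith))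
    fun x hx y hy hxy => exists_separation_baseChange hβ hβ' hS hinv
      (hmem.mono_right (Icc_subset_Icc_left ht)) hx hy hxy
  rw [image_id] at hle
  exact (pos_iff_ne_zero.2 (ENNReal.div_pos_iff.1 (hdim.trans_le hle)).1).trans_le (dimH_mono hsub)

end BaseChange

/-! ### Orbits accumulating at `1` -/

/-- The affine branch of the inverse of `(Tbeta β)^[n]` that sends `(Tbeta β)^[n] x` to `x`. -/
noncomputable def inverseBranch (β x : ℝ) (n : ℕ) (w : ℝ) : ℝ := x + (w - (Tbeta β)^[n] x) / β ^ n

section Horseshoe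

variable {β t t' ε s x : ℝ} {n : ℕ}

theorem dist_inverseBranch (hβ : 0 ≤ β) (x : ℝ) (n : ℕ) (z w : ℝ) :
    dist (inverseBranch β x n z) (inverseBranch β x n w) = dist z w / β ^ n := by
  rw [inverseBranch, inverseBranch, dist_add_left, Real.dist_eq, ← sub_div,
    sub_sub_sub_cancel_right, abs_div, abs_of_nonneg (pow_nonneg hβ n), Real.dist_eq]

theorem inverseBranch_mem_Icc (hβ : 0 ≤ β) {w : ℝ}
    (hw : w ∈ Icc ((Tbeta β)^[n] x - ε) ((Tbeta β)^[n] x)) :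
    inverseBranch β x n w ∈ Icc (x - ε / β ^ n) x := by
  have hlower : -ε / β ^ n ≤ (w - (Tbeta β)^[n] x) / β ^ n := by
    gcongr
    linarith [hw.1]
  have hupper : (w - (Tbeta β)^[n] x) / β ^ n ≤ 0 :=
    div_nonpos_of_nonpos_of_nonneg (sub_nonpos.2 hw.2) (by positivity)
  rw [neg_div] at hlower
  constructor <;> (rw [inverseBranch]; linarith)

theorem iterate_Tbeta_eq_add {w : ℝ}
    (h : ∀ k ≤ n, (Tbeta β)^[k] x + β ^ k * (w - x) ∈ Ico (0 : ℝ) 1) :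
    ∀ k ≤ n, (Tbeta β)^[k] w = (Tbeta β)^[k] x + β ^ k * (w - x) := by
  intro k hk
  induction k with
  | zero => simp
  | succ k ih =>
    have hmem := h (k + 1) hk
    rw [Function.iterate_succ_apply'] at hmem
    rw [Function.iterate_succ_apply', Function.iterate_succ_apply', ih (by lia),
      ← Int.fract_eq_self.2 hmem, Tbeta, Int.fract_eq_fract]
    refine ⟨⌊β * (Tbeta β)^[k] x⌋, ?_⟩
    rw [floor_mul_eq]
    ring

theorem add_pow_mul_inverseBranch_sub_mem_Icc (hβ : 1 ≤ β)
    (hx : ∀ k ≤ n, (Tbeta β)^[k] x ∈ Icc (t + ε) s) {w : ℝ}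
    (hw : w ∈ Icc ((Tbeta β)^[n] x - ε) ((Tbeta β)^[n] x)) :
    ∀ k ≤ n, (Tbeta β)^[k] x + β ^ k * (inverseBranch β x n w - x) ∈ Icc t s := by
  intro k hk
  have hβk : 0 < β ^ k := by positivity
  have hmem := inverseBranch_mem_Icc (by linarith) hw
  have hε : 0 ≤ ε := by linarith [hw.1, hw.2]
  have hlower : -ε ≤ β ^ k * (inverseBranch β x n w - x) :=
    calc -ε ≤ -(β ^ k * (ε / β ^ n)) := by
          rw [neg_le_neg_iff, mul_div_left_comm]
          exact mul_le_of_le_one_right hε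
            (div_le_one_of_le₀ (pow_le_pow_right₀ hβ hk) (by positivity))
      _ ≤ β ^ k * (inverseBranch β x n w - x) := by
          rw [← mul_neg]
          gcongr
          linarith [hmem.1]
  have hupper : β ^ k * (inverseBranch β x n w - x) ≤ 0 :=
    mul_nonpos_of_nonneg_of_nonpos hβk.le (sub_nonpos.2 hmem.2)
  constructor <;> linarith [(hx k hk).1, (hx k hk).2]

theorem iterate_Tbeta_inverseBranch (hβ : 1 ≤ β) (ht : 0 ≤ t) (hs : s < 1)
    (hx : ∀ k ≤ n, (Tbeta β)^[k] x ∈ Icc (t + ε) s) {w : ℝ}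
    (hw : w ∈ Icc ((Tbeta β)^[n] x - ε) ((Tbeta β)^[n] x)) :
    (∀ k ≤ n, (Tbeta β)^[k] (inverseBranch β x n w) ∈ Icc t s) ∧
      (Tbeta β)^[n] (inverseBranch β x n w) = w := by
  have hmem := add_pow_mul_inverseBranch_sub_mem_Icc hβ hx hw
  have hshadow := iterate_Tbeta_eq_add fun k hk =>
    ⟨ht.trans (hmem k hk).1, (hmem k hk).2.trans_lt hs⟩
  refine ⟨fun k hk => hshadow k hk ▸ hmem k hk, ?_⟩
  rw [hshadow n le_rfl, inverseBranch, add_sub_cancel_left, mul_div_cancel₀ _ (by positivity),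
    add_sub_cancel]

/-- A horseshoe with two legs over `Icc l r`: the orbits of `x 0` and `x 1` are in
`Icc r (l + ε)` at the times `n 0` and `n 1`, by which time distances have expanded so much that
the inverse branches through `x 0` and `x 1` map `Icc l r` into itself with disjoint images. -/
structure IsHorseshoe (β l r ε : ℝ) (x : Fin 2 → ℝ) (n : Fin 2 → ℕ) : Prop where
  nonneg : 0 ≤ ε
  pos : ∀ a, 0 < n a
  mem : ∀ a, x a ∈ Icc (l + ε / β ^ n a) r
  iterate_mem : ∀ a, (Tbeta β)^[n a] (x a) ∈ Icc r (l + ε)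
  gap : x 0 < x 1 - ε / β ^ n 1

namespace IsHorseshoe

variable {l r : ℝ} {x : Fin 2 → ℝ} {n : Fin 2 → ℕ}

theorem Icc_subset (H : IsHorseshoe β l r ε x n) (a : Fin 2) :
    Icc l r ⊆ Icc ((Tbeta β)^[n a] (x a) - ε) ((Tbeta β)^[n a] (x a)) :=
  Icc_subset_Icc (sub_le_iff_le_add.2 (H.iterate_mem a).2) (H.iterate_mem a).1

theorem inverseBranch_mem (H : IsHorseshoe β l r ε x n) (hβ : 0 ≤ β) (a : Fin 2) {w : ℝ}
    (hw : w ∈ Icc l r) : inverseBranch β (x a) (n a) w ∈ Icc (x a - ε / β ^ n a) (x a) :=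
  inverseBranch_mem_Icc hβ (H.Icc_subset a hw)

theorem mapsTo (H : IsHorseshoe β l r ε x n) (hβ : 0 ≤ β) (a : Fin 2) :
    MapsTo (inverseBranch β (x a) (n a)) (Icc l r) (Icc l r) := fun _ hw =>
  Icc_subset_Icc (le_sub_iff_add_le.2 (H.mem a).1) (H.mem a).2 (H.inverseBranch_mem hβ a hw)

theorem gap_le_dist (H : IsHorseshoe β l r ε x n) (hβ : 0 ≤ β) {a b : Fin 2} (hab : a ≠ b)
    {z w : ℝ} (hz : z ∈ Icc l r) (hw : w ∈ Icc l r) :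
    x 1 - ε / β ^ n 1 - x 0 ≤
      dist (inverseBranch β (x a) (n a) z) (inverseBranch β (x b) (n b) w) := by
  wlog h : a = 0 ∧ b = 1 generalizing a b z w
  · rw [dist_comm]
    exact this hab.symm hw hz (by lia)
  obtain ⟨rfl, rfl⟩ := h
  rw [dist_comm]
  exact (sub_le_sub (H.inverseBranch_mem hβ 1 hw).1 (H.inverseBranch_mem hβ 0 hz).2).trans
    (le_abs_self _)

theorem exists_coding (H : IsHorseshoe β l r ε x n) (hβ : 1 < β) :
    ∃ f : (ℕ → Fin 2) → ℝ, (∀ b, f b ∈ Icc l r) ∧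
      (∀ b, f b = inverseBranch β (x (b 0)) (n (b 0)) (f fun k => b (k + 1))) ∧
      0 < dimH (range f) := by
  lift β to ℝ≥0 using by linarith
  have hβ' : 1 < β := mod_cast hβ
  let φ (a : Fin 2) : Icc l r → Icc l r := (H.mapsTo β.coe_nonneg a).restrict
  have hdist (a : Fin 2) (z w : Icc l r) : dist (φ a z) (φ a w) = dist z w / β ^ n a :=
    dist_inverseBranch β.coe_nonneg _ _ _ _
  have hlip (a : Fin 2) : LipschitzWith β⁻¹ (φ a) := .of_dist_le_mul fun z w => by
    rw [hdist, NNReal.coe_inv, inv_mul_eq_div]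
    gcongr
    exact le_self_pow₀ hβ.le (H.pos a).ne'
  have hanti (a : Fin 2) : AntilipschitzWith (β ^ (n 0 + n 1)) (φ a) :=
    .of_le_mul_dist fun z w => by
      have hna : n a ≤ n 0 + n 1 := by fin_cases a <;> simp
      rw [hdist, NNReal.coe_pow, mul_div_left_comm]
      exact le_mul_of_one_le_right dist_nonneg
        ((one_le_div (by positivity)).2 (pow_le_pow_right₀ hβ.le hna))
  have : Nonempty (Icc l r) := ⟨φ 0 ⟨r, ?_, le_rfl⟩⟩
  · obtain ⟨f, hf⟩ := BetaTransformation.exists_coding (inv_lt_one_of_one_lt₀ hβ') hlip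
    have hdim : 0 < dimH (range f) :=
      dimH_range_coding_pos (one_lt_pow₀ hβ' (by have := H.pos 0; lia)) (sub_pos.2 H.gap) hf hanti
        fun _ _ hab z w => H.gap_le_dist β.coe_nonneg hab z.2 w.2
    refine ⟨fun b => f b, fun b => (f b).2, fun b => congrArg Subtype.val (hf b), ?_⟩
    rwa [← image_univ, ← image_image Subtype.val f, isometry_subtype_coe.dimH_image, image_univ]
  · linarith [(H.mem 0).1, (H.mem 0).2, div_nonneg H.nonneg (pow_nonneg β.coe_nonneg (n 0))]

theorem dimH_trappedSet_pos (H : IsHorseshoe β l r ε x n) (hβ : 1 < β) (ht : 0 ≤ t) (hs : s < 1)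
    (hx : ∀ a, ∀ k ≤ n a, (Tbeta β)^[k] (x a) ∈ Icc (t + ε) s) :
    0 < dimH (trappedSet (Tbeta β) (Icc t s)) := by
  obtain ⟨f, hfmem, hf, hdim⟩ := H.exists_coding hβ
  have horbit (b : ℕ → Fin 2) := iterate_Tbeta_inverseBranch hβ.le ht hs (hx (b 0))
    (H.Icc_subset (b 0) (hfmem fun k => b (k + 1)))
  simp only [← hf] at horbit
  exact hdim.trans_le (dimH_mono (range_coding_subset_trappedSet H.pos
    (fun b => (horbit b).1) fun b => (horbit b).2))

end IsHorseshoe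

theorem frequently_lt_of_forall_exists_lt {α : Type*} [LinearOrder α] {u : ℕ → α} {a : α}
    (hu : ∀ n, u n < a) (h : ∀ s < a, ∃ n, s < u n) : ∀ s < a, ∃ᶠ n in atTop, s < u n := by
  intro s hs
  rw [Nat.frequently_atTop_iff_infinite]
  intro hfin
  obtain ⟨m, hm, hmax⟩ := exists_max_image _ u hfin (h s hs)
  obtain ⟨k, hk⟩ := h (u m) (hu m)
  exact (hmax k (lt_trans hm hk)).not_gt hk

theorem exists_isHorseshoe {z : ℝ} (hβ : 1 < β) (hε : 0 < ε) (hz : z ∈ Ico (0 : ℝ) 1)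
    (hsup : ∀ s < 1, ∃ m : ℕ, s < (Tbeta β)^[m] z) :
    ∃ (r : ℝ) (j n : Fin 2 → ℕ),
      IsHorseshoe β (1 - ε) r ε (fun a => (Tbeta β)^[j a] z) n := by
  have hlt (m : ℕ) : (Tbeta β)^[m] z < 1 := (iterate_Tbeta_mem_Ico β hz m).2
  obtain ⟨i, hi⟩ := hsup (1 - ε) (by linarith)
  obtain ⟨j, hij⟩ := hsup _ (hlt i)
  set x := (Tbeta β)^[i] z
  set y := (Tbeta β)^[j] z
  have hcontract : Tendsto (fun n : ℕ => ε / β ^ n) atTop (𝓝 0) :=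
    tendsto_const_nhds.div_atTop (tendsto_pow_atTop_atTop_of_one_lt hβ)
  have hreturn (m : ℕ) : ∃ n, y < (Tbeta β)^[n] ((Tbeta β)^[m] z) ∧ 0 < n ∧
      ε / β ^ n < x - (1 - ε) ∧ ε / β ^ n < y - x := by
    have hfreq := frequently_lt_of_forall_exists_lt hlt hsup y (hlt j)
    rw [← map_add_atTop_eq_nat m, frequently_map] at hfreq
    simp only [Function.iterate_add_apply] at hfreq
    exact (hfreq.and_eventually ((eventually_gt_atTop 0).and
      ((hcontract.eventually_lt_const (by linarith)).and
        (hcontract.eventually_lt_const (by linarith))))).exists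
  choose n hn hpos hnx hny using hreturn
  refine ⟨y, ![i, j], fun a => n (![i, j] a), hε.le, fun a => hpos _, ?_, fun a => ⟨(hn _).le, ?_⟩,
    lt_sub_comm.1 (hny j)⟩
  · exact Fin.forall_fin_two.2
      ⟨⟨(lt_sub_iff_add_lt'.1 (hnx i)).le, hij.le⟩,
        (lt_sub_iff_add_lt'.1 ((hnx j).trans (sub_lt_sub_right hij _))).le, le_rfl⟩
  · rw [sub_add_cancel, ← Function.iterate_add_apply]
    exact (hlt _).le

theorem exists_dimH_trappedSet_pos_of_forall_exists_lt {z : ℝ} (hβ : 1 < β) (ht : 0 ≤ t)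
    (htt' : t < t') (hz : z ∈ survivor β t') (hsup : ∀ s < 1, ∃ m : ℕ, s < (Tbeta β)^[m] z) :
    ∃ s < 1, 0 < dimH (trappedSet (Tbeta β) (Icc t s)) := by
  obtain ⟨r, j, n, H⟩ := exists_isHorseshoe hβ (sub_pos.2 htt') hz.1 hsup
  have hbound : ∀ᶠ s in 𝓝[<] (1 : ℝ), ∀ a, ∀ k ∈ Iic (n a), (Tbeta β)^[k + j a] z ≤ s :=
    eventually_all.2 fun a => (eventually_all_finite (finite_Iic _)).2 fun k _ =>
      eventually_nhdsWithin_of_eventually_nhds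
        (eventually_ge_nhds (iterate_Tbeta_mem_Ico β hz.1 _).2)
  obtain ⟨s, hle, hs⟩ := (hbound.and self_mem_nhdsWithin).exists
  refine ⟨s, hs, H.dimH_trappedSet_pos hβ ht hs fun a k hk => ?_⟩
  rw [add_sub_cancel, ← Function.iterate_add_apply]
  exact ⟨hz.2 _, hle a k hk⟩

theorem exists_dimH_trappedSet_pos (hβ : 1 < β) (ht : 0 ≤ t) (htt' : t < t')
    (hdim : 0 < dimH (survivor β t')) : ∃ s < 1, 0 < dimH (trappedSet (Tbeta β) (Icc t s)) := by
  by_cases! hsup : ∃ z ∈ survivor β t', ∀ s < 1, ∃ n : ℕ, s < (Tbeta β)^[n] z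
  · obtain ⟨z, hz, hz1⟩ := hsup
    exact exists_dimH_trappedSet_pos_of_forall_exists_lt hβ ht htt' hz hz1
  have hcover : survivor β t' ⊆ ⋃ k : ℕ, trappedSet (Tbeta β) (Icc t (1 - 1 / ((k : ℝ) + 1))) := by
    intro z hz
    obtain ⟨s, hs, hzs⟩ := hsup z hz
    obtain ⟨k, hk⟩ := exists_nat_one_div_lt (sub_pos.2 hs)
    exact mem_iUnion.2 ⟨k, fun n => ⟨htt'.le.trans (hz.2 n), by linarith [hzs n]⟩⟩
  have hpos := hdim.trans_le (dimH_mono hcover)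
  rw [dimH_iUnion, lt_iSup_iff] at hpos
  obtain ⟨k, hk⟩ := hpos
  exact ⟨_, sub_lt_self _ (by positivity), hk⟩

end Horseshoe

/-! ### The critical value -/

theorem survivor_anti (β : ℝ) : Antitone (survivor β) :=
  fun _ _ h _ hx => ⟨hx.1, fun n => h.trans (hx.2 n)⟩

theorem tau_nonneg (β : ℝ) : 0 ≤ tau β := Real.sInf_nonneg fun _ ht => ht.1.le

theorem dimH_survivor_pos_of_lt_tau {β t : ℝ} (ht : 0 < t) (h : t < tau β) :
    0 < dimH (survivor β t) :=
  pos_iff_ne_zero.2 fun h0 => h.not_ge (csInf_le ⟨0, fun _ hs => hs.1.le⟩ ⟨ht, h0⟩)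

theorem le_tau_of_dimH_survivor_pos {β t : ℝ} (h : 0 < dimH (survivor β t)) : t ≤ tau β := by
  have hempty : survivor β 1 = ∅ :=
    eq_empty_of_forall_notMem fun x hx => (hx.2 0).not_gt hx.1.2
  refine le_csInf ⟨1, one_pos, by rw [hempty, dimH_empty]⟩ fun s hs => ?_
  by_contra! hst
  exact (h.trans_le (dimH_mono (survivor_anti β hst.le))).ne' hs.2

theorem tau_le_tau_add {β β' : ℝ} (hβ : 1 < β) (hββ' : β < β') :
    tau β ≤ tau β' + (β' - β) / (β' - 1) := by
  have hβ' : 1 < β' := hβ.trans hββ'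
  refine le_of_forall_lt_imp_le_of_dense fun t ht => ?_
  rcases le_total t ((β' - β) / (β' - 1)) with hδ | hδ
  · exact hδ.trans (le_add_of_nonneg_left (tau_nonneg β'))
  have hδ0 : 0 < (β' - β) / (β' - 1) := div_pos (by linarith) (by linarith)
  have ht0 : 0 < t := hδ0.trans_le hδ
  rw [← sub_le_iff_le_add]
  refine le_tau_of_dimH_survivor_pos (dimH_survivor_pos_of_baseChange hβ hβ' (sub_nonneg.2 hδ)
    ((div_lt_one (by linarith)).2 hββ') (fun x hx => hx.1) ?_ (fun x hx => ⟨?_, ?_⟩)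
    (dimH_survivor_pos_of_lt_tau ht0 ht))
  · rw [survivor_eq_trappedSet β ht0.le]
    exact mapsTo_trappedSet _ _
  · exact (sub_le_sub_right (hx.2 0) _).trans (sub_div_le_baseChange hβ' hββ'.le hx.1)
  · exact baseChange_le_div (by linarith) hβ' hββ'.le hx.1.2.le

/-- The bound of `tau_le_tau_add`, integrated via `1 - u / v ≤ log v - log u`. -/
theorem monotoneOn_tau_add_log : MonotoneOn (fun β => tau β + Real.log (β - 1)) (Ioi 1) := by
  intro β hβ β' hβ' hle
  have hpos : 0 < β - 1 := sub_pos.2 hβ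
  have hpos' : 0 < β' - 1 := sub_pos.2 hβ'
  rcases hle.eq_or_lt with rfl | hlt
  · exact le_rfl
  have hlog : Real.log (β - 1) - Real.log (β' - 1) ≤ -((β' - β) / (β' - 1)) := by
    rw [← Real.log_div hpos.ne' hpos'.ne']
    refine (Real.log_le_sub_one_of_pos (div_pos hpos hpos')).trans_eq ?_
    field_simp
    ring
  linarith [tau_le_tau_add hβ hlt]

theorem lowerSemicontinuousWithinAt_tau {β₀ : ℝ} (h : 1 < β₀) :
    LowerSemicontinuousWithinAt tau (Iio β₀) β₀ := by
  intro a ha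
  rcases lt_or_ge a 0 with ha0 | ha0
  · exact Eventually.of_forall fun β => ha0.trans_le (tau_nonneg β)
  obtain ⟨t, hat, htτ⟩ := exists_between ha
  obtain ⟨t', htt', ht'τ⟩ := exists_between htτ
  have ht : 0 ≤ t := ha0.trans hat.le
  obtain ⟨s, hs, hdim⟩ := exists_dimH_trappedSet_pos h ht htt'
    (dimH_survivor_pos_of_lt_tau (ht.trans_lt htt') ht'τ)
  have hcont : ContinuousAt (fun β => s + (β₀ - β) / (β - 1)) β₀ := by
    fun_prop (disch := linarith)
  have hρ : ∀ᶠ β in 𝓝[<] β₀, s + (β₀ - β) / (β - 1) < 1 :=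
    eventually_nhdsWithin_of_eventually_nhds (hcont.eventually_lt_const (by simpa using hs))
  filter_upwards [self_mem_nhdsWithin, mem_nhdsWithin_of_mem_nhds (lt_mem_nhds h), hρ]
    with β (hβ : β < β₀) hβ1 hρ
  have hIco : trappedSet (Tbeta β₀) (Icc t s) ⊆ Ico 0 1 := fun x hx =>
    ⟨ht.trans (hx 0).1, (hx 0).2.trans_lt hs⟩
  refine hat.trans_le (le_tau_of_dimH_survivor_pos (dimH_survivor_pos_of_baseChange h hβ1 ht hρ
    hIco (mapsTo_trappedSet _ _) (fun x hx => ⟨?_, ?_⟩) hdim))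
  · exact (hx 0).1.trans (le_baseChange hβ1 hβ.le (hIco hx))
  · exact (baseChange_le_add_div hβ1 hβ.le (hIco hx)).trans (by gcongr; exact (hx 0).2)

section OneSidedLimits

variable {α : Type*} [LinearOrder α] [TopologicalSpace α] {f g : α → ℝ} {a : α}

theorem exists_tendsto_nhdsGT_of_monotoneOn_add [OrderTopology α] [(𝓝[>] a).NeBot]
    (hfg : MonotoneOn (fun x => f x + g x) (Ici a)) (hg : ContinuousWithinAt g (Ioi a) a) :
    ∃ l, Tendsto f (𝓝[>] a) (𝓝 l) ∧ f a ≤ l := by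
  have hbdd : ∀ y ∈ (fun x => f x + g x) '' Ioi a, f a + g a ≤ y := by
    rintro _ ⟨x, hx, rfl⟩
    exact hfg self_mem_Ici (mem_Ici_of_Ioi hx) (le_of_lt hx)
  have hlim := ((hfg.mono Ioi_subset_Ici_self).tendsto_nhdsGT ⟨_, hbdd⟩)
  have hf := hlim.sub hg.tendsto
  simp only [add_sub_cancel_right] at hf
  refine ⟨_, hf, le_sub_iff_add_le.2 (ge_of_tendsto hlim ?_)⟩
  filter_upwards [self_mem_nhdsWithin] with x hx using hbdd _ ⟨x, hx, rfl⟩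

theorem tendsto_nhdsLT_of_monotoneOn_add {s : Set α} (hfg : MonotoneOn (fun x => f x + g x) s)
    (hs : s ∈ 𝓝 a) (hg : ContinuousWithinAt g (Iio a) a)
    (hf : LowerSemicontinuousWithinAt f (Iio a) a) : Tendsto f (𝓝[<] a) (𝓝 (f a)) := by
  have hlim : Tendsto (fun x => f a + (g a - g x)) (𝓝[<] a) (𝓝 (f a)) := by
    simpa using (hg.tendsto.const_sub (g a)).const_add (f a)
  refine tendsto_order.2 ⟨hf, fun b hb => ?_⟩
  filter_upwards [self_mem_nhdsWithin, mem_nhdsWithin_of_mem_nhds hs, hlim.eventually_lt_const hb]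
    with x hx hxs hlt
  linarith [hfg hxs (mem_of_mem_nhds hs) (le_of_lt hx)]

end OneSidedLimits

end BetaTransformation

open BetaTransformation

/-- `τ` has no downward jumps: for every `β₀ ∈ (1,∞)`,
`lim_{β↘β₀} τ(β) ≥ τ(β₀)` and `lim_{β↗β₀} τ(β) = τ(β₀)`. -/
theorem tau_no_downward_jumps (β₀ : ℝ) (h : 1 < β₀) :
    (∃ l : ℝ, Filter.Tendsto tau (𝓝[>] β₀) (𝓝 l) ∧ tau β₀ ≤ l) ∧
    Filter.Tendsto tau (𝓝[<] β₀) (𝓝 (tau β₀)) := by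
  have hlog : ContinuousAt (fun β => Real.log (β - 1)) β₀ := by
    fun_prop (disch := linarith)
  have hmono := monotoneOn_tau_add_log
  exact ⟨exists_tendsto_nhdsGT_of_monotoneOn_add
      (hmono.mono (Ici_subset_Ioi.2 h)) hlog.continuousWithinAt,
    tendsto_nhdsLT_of_monotoneOn_add hmono (Ioi_mem_nhds h) hlog.continuousWithinAt
      (lowerSemicontinuousWithinAt_tau h)⟩
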